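/- Let $(X,d)$ be a compact metric space, $T$ a homeomorphism of $X$, and $\mu$ a $T$-invariant Borel probability measure satisfying $\int_X\log^+\mathcal{L}_1^{r_*}\,d\mu<\infty$ for some $r_*>0$. Then for $\mu$-a.e. $x$ with $\chi(x) := \lim_n \frac1n\log^+\mathcal{L}_n(x) < \infty$, the following holds: for every $\lambda > \chi(x)$ and every $\epsilon>0$, there exist $\eta>0$ and $N\ge 1$ such that $B(x, \eta e^{-n\lambda}) \subset B_n(x,\epsilon,T)$ for all $n\ge N$, i.e. small metric balls of exponentially shrinking radius are contained in Bowen balls of fixed radius. -/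

import Mathlib

/-!
The point is to compare two growth rates: that of `log⁺ 𝓛ₙ(x)`, and that of `log⁺ 𝓛ₙʳ(x)` for a small
fixed radius `r`. Once `𝓛ₙʳ(x) ≤ exp (n λ)` for all large `n` and some `r ≤ ε`, an induction on time
shows that points within `η exp (-n λ)` of `x` stay `r`-close to the orbit of `x` up to time `n`
(`exists_ball_subset_bowenBall`).

For each `r`, the sequence `log⁺ 𝓛ₙʳ` is a nonnegative subadditive cocycle, and these cocycles
decrease to `log⁺ 𝓛ₙ` as `r ↘ 0`. It is therefore enough that, almost everywhere, the infimum over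
`r` of the upper growth rates is at most the lower growth rate of the infimum
(`ae_exists_eventually_le`). This is a version of Kingman's theorem, proved by a covering argument:
where the lower growth rate is below `q`, each point of the orbit starts a block of some length `k`
with `log⁺ 𝓛ₖʳ ≤ k q`, for some `r`. Up to a set `B` on which `log⁺ 𝓛₁` at radius `rstar` has small
integral, the length of the block and the radius can be chosen uniformly. Cutting an orbit segment
into such blocks (`subadditive_le_birkhoffSum`) leaves an error given by the Birkhoff sums of
`log⁺ 𝓛₁` restricted to `B`, and the maximal ergodic inequality (`maximal_ergodic_inequality`) shows
that these are small relative to `n` outside a set of small measure. The maximal inequality itself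
follows from the same covering lemma.
-/

open MeasureTheory Filter Set Topology
open scoped ENNReal NNReal

/-- The Bowen ball of step-length `n` and radius `r` centered at `x`. -/
def bowenBall {X : Type*} [PseudoMetricSpace X] (T : X → X) (n : ℕ) (x : X) (r : ℝ) : Set X :=
  {y | ∀ k < n, dist (T^[k] x) (T^[k] y) < r}

/-- `𝓛ₙʳ(x) = sup_{y ∈ Bₙ(x,r) \ {x}} d(Tⁿx, Tⁿy)/d(x,y)`, with `sup ∅ = 0`. -/
noncomputable def lipBowen {X : Type*} [PseudoMetricSpace X] (T : X → X) (n : ℕ) (r : ℝ)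
    (x : X) : ℝ≥0∞ :=
  ⨆ y ∈ bowenBall T n x r \ {x}, ENNReal.ofReal (dist (T^[n] x) (T^[n] y) / dist x y)

/-- The pointwise Lipschitz constant `𝓛ₙ(x) = lim_{r ↘ 0} 𝓛ₙʳ(x)`. -/
noncomputable def pointwiseLip {X : Type*} [PseudoMetricSpace X] (T : X → X) (n : ℕ)
    (x : X) : ℝ≥0∞ :=
  ⨅ (r : ℝ) (_ : 0 < r), lipBowen T n r x

/-- `log⁺` on `[0,∞]`. -/
noncomputable def logPlus (a : ℝ≥0∞) : ℝ≥0∞ :=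
  if a = ⊤ then ⊤ else ENNReal.ofReal (Real.log a.toReal)

/-! ### Covering lemma and maximal ergodic inequality -/

/-- Comparison of a subadditive sequence with Birkhoff sums along an orbit. The orbit segment is cut
greedily into blocks of length at most `m` on which `g k ≤ birkhoffSum T H k`; the last block may
stick out of the segment, and there `g 1 ≤ K + H` is used at each of its at most `m` points. -/
lemma subadditive_le_birkhoffSum {X : Type*} {T : X → X} {g : ℕ → X → ℝ≥0∞} {H : X → ℝ≥0∞}
    {G : Set X} {m : ℕ} {K : ℝ≥0∞}
    (hsub : ∀ n l x, g (n + l) x ≤ g n x + g l (T^[n] x)) (h0 : ∀ x, g 0 x = 0)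
    (hG : ∀ x ∈ G, T x ∈ G)
    (hblock : ∀ x ∈ G, ∃ k, 1 ≤ k ∧ k ≤ m ∧ g k x ≤ birkhoffSum T H k x)
    (hK : ∀ x, g 1 x ≤ K + H x) (n : ℕ) :
    ∀ x ∈ G, g n x ≤ m * K + birkhoffSum T H n x := by
  have hGk : ∀ k, ∀ x ∈ G, T^[k] x ∈ G := by
    intro k
    induction k with
    | zero => intro x hx; exact hx
    | succ k ih => intro x hx; rw [Function.iterate_succ_apply]; exact ih _ (hG x hx)
  have hcrude : ∀ n x, g n x ≤ n * K + birkhoffSum T H n x := by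
    intro n
    induction n with
    | zero => intro x; simp [h0]
    | succ n ih =>
      intro x
      calc g (n + 1) x ≤ g n x + g 1 (T^[n] x) := hsub n 1 x
        _ ≤ (n * K + birkhoffSum T H n x) + (K + H (T^[n] x)) := add_le_add (ih x) (hK _)
        _ = _ := by rw [birkhoffSum_succ]; push_cast; ring
  induction n using Nat.strong_induction_on with
  | _ n ih =>
    intro x hx
    obtain ⟨k, hk1, hkm, hk⟩ := hblock x hx
    rcases le_or_gt k n with hkn | hkn
    · obtain ⟨l, rfl⟩ := Nat.exists_eq_add_of_le hkn
      calc g (k + l) x ≤ g k x + g l (T^[k] x) := hsub k l x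
        _ ≤ birkhoffSum T H k x + (m * K + birkhoffSum T H l (T^[k] x)) :=
          add_le_add hk (ih l (by omega) _ (hGk k x hx))
        _ = _ := by rw [birkhoffSum_add]; ring
    · refine (hcrude n x).trans ?_
      gcongr
      omega

lemma le_of_forall_nat_mul_le {a b C : ℝ≥0∞} (hC : C ≠ ⊤)
    (h : ∀ n : ℕ, n * a ≤ C + n * b) : a ≤ b := by
  refine ENNReal.le_of_forall_pos_le_add fun ε hε _ => ?_
  obtain ⟨n, hn⟩ := ENNReal.exists_nat_mul_gt (a := (ε : ℝ≥0∞)) (by simpa using hε.ne') hC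
  have hn0 : (n : ℝ≥0∞) ≠ 0 := by
    rintro h0
    simp [h0] at hn
  have : (n : ℝ≥0∞) * a ≤ n * (b + ε) := by
    rw [mul_add, add_comm]
    exact (h n).trans (add_le_add hn.le le_rfl)
  exact (ENNReal.mul_le_mul_iff_right hn0 (ENNReal.natCast_ne_top n)).1 this

lemma lintegral_birkhoffSum {X : Type*} [MeasurableSpace X] {μ : Measure X} {T : X → X}
    (hT : MeasurePreserving T μ μ) {h : X → ℝ≥0∞} (hh : Measurable h) (n : ℕ) :
    ∫⁻ x, birkhoffSum T h n x ∂μ = n * ∫⁻ x, h x ∂μ := by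
  unfold birkhoffSum
  rw [lintegral_finsetSum]
  · simp [fun k => (hT.iterate k).lintegral_comp hh]
  · exact fun k _ => hh.comp (hT.iterate k).measurable

/-- The maximal ergodic inequality for nonnegative functions. With the block lengths bounded by
`m + 1`, the covering lemma bounds `α` times the number of visits to the set up to time `n` by the
Birkhoff sum of `h` plus a constant; integrating and letting `n` grow gives the claim. -/
lemma maximal_ergodic_inequality {X : Type*} [MeasurableSpace X] {μ : Measure X}
    [IsProbabilityMeasure μ] {T : X → X} (hT : MeasurePreserving T μ μ) {h : X → ℝ≥0∞}
    (hh : Measurable h) (α : ℝ≥0) :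
    α * μ {x | ∃ n : ℕ, 1 ≤ n ∧ n * (α : ℝ≥0∞) ≤ birkhoffSum T h n x} ≤ ∫⁻ x, h x ∂μ := by
  set S : ℕ → Set X :=
    fun m => {x | ∃ n : ℕ, 1 ≤ n ∧ n ≤ m + 1 ∧ n * (α : ℝ≥0∞) ≤ birkhoffSum T h n x} with hS
  have hSm : ∀ m, MeasurableSet (S m) := by
    intro m
    have : S m = ⋃ n : ℕ, ⋃ (_ : 1 ≤ n), ⋃ (_ : n ≤ m + 1),
        {x | n * (α : ℝ≥0∞) ≤ birkhoffSum T h n x} := by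
      ext x; simp [hS, and_left_comm]
    rw [this]
    refine .iUnion fun n => .iUnion fun _ => .iUnion fun _ => measurableSet_le measurable_const ?_
    exact Finset.measurable_fun_sum _ fun k _ => hh.comp (hT.iterate k).measurable
  have hmono : Monotone S := by
    rintro a b hab x ⟨n, h1, h2, h3⟩
    exact ⟨n, h1, by omega, h3⟩
  have hU : {x | ∃ n : ℕ, 1 ≤ n ∧ n * (α : ℝ≥0∞) ≤ birkhoffSum T h n x} = ⋃ m, S m := by
    ext x
    simp only [hS, mem_ofPred_eq, mem_iUnion]
    constructor
    · rintro ⟨n, h1, h2⟩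
      exact ⟨n, n, h1, by omega, h2⟩
    · rintro ⟨m, n, h1, -, h2⟩
      exact ⟨n, h1, h2⟩
  rw [hU, hmono.measure_iUnion, ENNReal.mul_iSup]
  refine iSup_le fun m => ?_
  set u : X → ℝ≥0∞ := (S m).indicator (fun _ => (α : ℝ≥0∞)) with hu
  have hum : Measurable u := measurable_const.indicator (hSm m)
  have hule : ∀ x, u x ≤ α := fun x => indicator_le_self' (fun _ _ => zero_le) x
  have key : ∀ n x, birkhoffSum T u n x ≤ (m + 1 : ℕ) * (α : ℝ≥0∞) + birkhoffSum T h n x := by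
    intro n x
    refine subadditive_le_birkhoffSum (G := univ) (fun n l x => (birkhoffSum_add T u n l x).le)
      (fun x => birkhoffSum_zero T u x) (fun _ _ => mem_univ _) (fun x _ => ?_) (fun x => ?_) n x
      (mem_univ x)
    · by_cases hx : x ∈ S m
      · obtain ⟨k, h1, h2, h3⟩ := hx
        refine ⟨k, h1, h2, le_trans ?_ h3⟩
        calc birkhoffSum T u k x ≤ ∑ _i ∈ Finset.range k, (α : ℝ≥0∞) :=
              Finset.sum_le_sum fun i _ => hule _
          _ = _ := by simp
      · exact ⟨1, le_rfl, by omega, by simp [hu, hx]⟩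
    · rw [birkhoffSum_one]
      exact (hule x).trans le_self_add
  refine le_of_forall_nat_mul_le (C := (m + 1 : ℕ) * (α : ℝ≥0∞))
    (ENNReal.mul_ne_top (ENNReal.natCast_ne_top _) ENNReal.coe_ne_top) fun n => ?_
  have hint : ∫⁻ x, u x ∂μ = α * μ (S m) := by
    rw [hu, lintegral_indicator_const (hSm m)]
  rw [← hint, ← lintegral_birkhoffSum hT hum, ← lintegral_birkhoffSum hT hh]
  calc ∫⁻ x, birkhoffSum T u n x ∂μ
      ≤ ∫⁻ x, ((m + 1 : ℕ) * (α : ℝ≥0∞) + birkhoffSum T h n x) ∂μ := lintegral_mono (key n)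
    _ = _ := by rw [lintegral_add_left measurable_const]; simp

/-! ### Growth rates of decreasing families of subadditive cocycles -/

/-- A set that contains its preimage up to a null set is almost everywhere forward invariant. -/
lemma ae_forall_iterate_mem {X : Type*} [MeasurableSpace X] {μ : Measure X}
    [IsProbabilityMeasure μ] {T : X → X} (hT : MeasurePreserving T μ μ) {E : Set X}
    (hE : MeasurableSet E) (hle : ∀ᵐ x ∂μ, T x ∈ E → x ∈ E) :
    ∀ᵐ x ∂μ, x ∈ E → ∀ k, T^[k] x ∈ E := by
  have h1 : T ⁻¹' E =ᵐ[μ] E :=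
    ae_eq_of_ae_subset_of_measure_ge hle (hT.measure_preimage hE.nullMeasurableSet).ge
      (hT.measurable hE).nullMeasurableSet (measure_ne_top _ _)
  have h2 : ∀ᵐ x ∂μ, x ∈ E → T x ∈ E := by
    filter_upwards [h1.mem_iff] with x hx hxE
    exact hx.2 hxE
  have h3 : ∀ᵐ x ∂μ, ∀ k, T^[k] x ∈ E → T (T^[k] x) ∈ E :=
    ae_all_iff.2 fun k => (hT.iterate k).quasiMeasurePreserving.ae h2
  filter_upwards [h3] with x hx hxE k
  induction k with
  | zero => exact hxE
  | succ k ih => rw [Function.iterate_succ_apply']; exact hx k ih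

/-- Interchange of the infimum over `j` with the time average, for a decreasing sequence `f j` of
subadditive cocycles: below the level `q` of the lower growth rate of `⨅ j, f j`, some single `f j`
has upper growth rate at most `q + 2 β`. -/
lemma ae_exists_eventually_le {X : Type*} [MeasurableSpace X] {μ : Measure X}
    [IsProbabilityMeasure μ] {T : X → X} (hT : MeasurePreserving T μ μ)
    {f : ℕ → ℕ → X → ℝ≥0∞} (hf : ∀ j n, Measurable (f j n))
    (hanti : ∀ n x, Antitone fun j => f j n x)
    (hsub : ∀ j n l x, f j (n + l) x ≤ f j n x + f j l (T^[n] x)) (h0 : ∀ j x, f j 0 x = 0)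
    (hint : ∫⁻ x, f 0 1 x ∂μ ≠ ⊤) (q β : ℝ≥0) (hβ : 0 < β) :
    ∀ᵐ x ∂μ, liminf (fun n : ℕ => (⨅ j, f j n x) / n) atTop < (q : ℝ≥0∞) →
      ∃ j, ∀ᶠ n : ℕ in atTop, f j n x ≤ n * ((q : ℝ≥0∞) + 2 * β) := by
  set F : X → ℝ≥0∞ := f 0 1 with hF
  have hFfin : ∀ᵐ x ∂μ, F x < ⊤ := ae_lt_top (hf 0 1) hint
  set E : Set X := {x | liminf (fun n : ℕ => (⨅ j, f j n x) / n) atTop < (q : ℝ≥0∞)} with hE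
  have hEm : MeasurableSet E := by
    refine measurableSet_lt (Measurable.liminf fun n => ?_) measurable_const
    exact (Measurable.iInf fun j => hf j n).div_const _
  have hEinv : ∀ᵐ x ∂μ, x ∈ E → ∀ k, T^[k] x ∈ E := by
    refine ae_forall_iterate_mem hT hEm ?_
    filter_upwards [hFfin] with x hx hTx
    obtain ⟨p, hp1, hpq⟩ := exists_between (show _ < (q : ℝ≥0∞) from hTx)
    obtain ⟨s, hps, hsq⟩ := exists_between hpq
    have hfreq := frequently_lt_of_liminf_lt (by isBoundedDefault) hp1
    -- `F x` is absorbed by the gap between `p` and `s` as soon as `F x ≤ n * (s - p)`.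
    have hlarge : ∀ᶠ n : ℕ in atTop, F x ≤ n * (s - p) := by
      obtain ⟨N, hN⟩ := ENNReal.exists_nat_mul_gt (a := s - p) (tsub_pos_of_lt hps).ne' hx.ne
      filter_upwards [eventually_ge_atTop N] with n hn
      exact hN.le.trans (by gcongr)
    have hsucc : ∃ᶠ n : ℕ in atTop, (⨅ j, f j (n + 1) x) / ((n + 1 : ℕ) : ℝ≥0∞) ≤ s := by
      refine (hfreq.and_eventually (hlarge.and (eventually_ge_atTop 1))).mono ?_
      rintro n ⟨h1, h2, h3⟩
      have hn0 : (n : ℝ≥0∞) ≠ 0 := by simp; omega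
      rw [ENNReal.div_lt_iff (.inl hn0) (.inl (ENNReal.natCast_ne_top n))] at h1
      refine ENNReal.div_le_of_le_mul ?_
      have h4 : (⨅ j, f j (n + 1) x) ≤ F x + ⨅ j, f j n (T x) := by
        rw [ENNReal.add_iInf]
        refine le_iInf fun j => (iInf_le _ j).trans ?_
        have := hsub j 1 n x
        rw [add_comm 1 n] at this
        exact this.trans (add_le_add (hanti 1 x (Nat.zero_le j)) le_rfl)
      calc (⨅ j, f j (n + 1) x) ≤ F x + ⨅ j, f j n (T x) := h4
        _ ≤ n * (s - p) + p * n := add_le_add h2 h1.le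
        _ = n * s := by rw [mul_comm p, ← mul_add, tsub_add_cancel_of_le hps.le]
        _ ≤ s * ((n + 1 : ℕ) : ℝ≥0∞) := by rw [mul_comm]; gcongr; omega
    refine lt_of_le_of_lt (liminf_le_of_frequently_le' ?_) hsq
    exact (tendsto_add_atTop_nat 1).frequently hsucc
  set A : ℕ → Set X := fun m => {x | ∃ k, 1 ≤ k ∧ k ≤ m + 1 ∧ f m k x ≤ k * (q : ℝ≥0∞)} with hA
  have hAm : ∀ m, MeasurableSet (A m) := by
    intro m
    have : A m = ⋃ k : ℕ, ⋃ (_ : 1 ≤ k), ⋃ (_ : k ≤ m + 1), {x | f m k x ≤ k * (q : ℝ≥0∞)} := by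
      ext x; simp [hA, and_left_comm]
    rw [this]
    exact .iUnion fun n => .iUnion fun _ => .iUnion fun _ =>
      measurableSet_le (hf _ _) measurable_const
  have hAmono : Monotone A := by
    rintro a b hab x ⟨k, h1, h2, h3⟩
    exact ⟨k, h1, by omega, (hanti k x hab).trans h3⟩
  have hEA : E ⊆ ⋃ m, A m := by
    intro x hx
    have hfreq := frequently_lt_of_liminf_lt (by isBoundedDefault) (show _ < (q : ℝ≥0∞) from hx)
    obtain ⟨n, h1, h2⟩ := (hfreq.and_eventually (eventually_ge_atTop 1)).exists
    have hn0 : (n : ℝ≥0∞) ≠ 0 := by simp; omega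
    rw [ENNReal.div_lt_iff (.inl hn0) (.inl (ENNReal.natCast_ne_top n)), iInf_lt_iff] at h1
    obtain ⟨j, hj⟩ := h1
    refine mem_iUnion.2 ⟨max j n, n, h2, by omega, ?_⟩
    rw [mul_comm]
    exact (hanti n x (le_max_left j n)).trans hj.le
  -- Outside `B m`, a good block of length at most `m + 1` starts and `F` is at most `m`.
  set B : ℕ → Set X := fun m => ((⋃ i, A i) \ A m) ∪ {x | (m : ℝ≥0∞) < F x} with hB
  have hBm : ∀ m, MeasurableSet (B m) := fun m =>
    ((MeasurableSet.iUnion hAm).diff (hAm m)).union (measurableSet_lt measurable_const (hf 0 1))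
  have hBanti : Antitone B := by
    intro a b hab
    refine union_subset_union (sdiff_subset_sdiff_right (hAmono hab)) fun x hx => ?_
    exact lt_of_le_of_lt (by exact_mod_cast hab) (show (b : ℝ≥0∞) < F x from hx)
  have hBnull : μ (⋂ m, B m) = 0 := by
    refine measure_mono_null ?_ (ae_iff.1 hFfin)
    intro x hx hlt
    rw [mem_iInter] at hx
    obtain ⟨N, hN⟩ := ENNReal.exists_nat_gt hlt.ne
    have hxU : x ∈ ⋃ i, A i := by
      rcases hx N with h | h
      · exact h.1
      · exact absurd (show (N : ℝ≥0∞) < F x from h) hN.not_gt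
    obtain ⟨i, hi⟩ := mem_iUnion.1 hxU
    rcases hx (max i N) with h | h
    · exact h.2 (hAmono (le_max_left i N) hi)
    · refine absurd (show ((max i N : ℕ) : ℝ≥0∞) < F x from h) (not_lt.2 (hN.le.trans ?_))
      exact_mod_cast le_max_right i N
  have hBlim : Tendsto (fun m => ∫⁻ x in B m, F x ∂μ) atTop (𝓝 0) := by
    refine tendsto_setLIntegral_zero hint ?_
    rw [← hBnull]
    exact tendsto_measure_iInter_atTop (fun m => (hBm m).nullMeasurableSet) hBanti
      ⟨0, measure_ne_top _ _⟩
  set G : Set X := {x | ∀ k, T^[k] x ∈ ⋃ m, A m} with hG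
  set bad : Set X :=
    {x | x ∈ G ∧ ¬ ∃ j, ∀ᶠ n : ℕ in atTop, f j n x ≤ n * ((q : ℝ≥0∞) + 2 * β)} with hbad
  have hbadle : ∀ m, β * μ bad ≤ ∫⁻ x in B m, F x ∂μ := by
    intro m
    set h : X → ℝ≥0∞ := (B m).indicator F with hh
    have hhm : Measurable h := (hf 0 1).indicator (hBm m)
    rw [← lintegral_indicator (hBm m)]
    refine le_trans ?_ (maximal_ergodic_inequality hT hhm β)
    gcongr
    rintro x ⟨hxG, hxbad⟩
    by_contra hcon
    simp only [mem_ofPred_eq, not_exists, not_and, not_le] at hcon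
    refine hxbad ⟨m, ?_⟩
    have hsplit : ∀ n y, birkhoffSum T (fun z => (q : ℝ≥0∞) + h z) n y
        = n * (q : ℝ≥0∞) + birkhoffSum T h n y := by
      intro n y
      simp [birkhoffSum, Finset.sum_add_distrib]
    have hcov : ∀ n, f m n x ≤ (m + 1 : ℕ) * (m : ℝ≥0∞) +
        birkhoffSum T (fun z => (q : ℝ≥0∞) + h z) n x := by
      intro n
      refine subadditive_le_birkhoffSum (G := G) (hsub m) (h0 m) ?_ ?_ ?_ n x hxG
      · intro y hy k
        rw [← Function.iterate_succ_apply]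
        exact hy (k + 1)
      · intro y hy
        by_cases hyA : y ∈ A m
        · obtain ⟨k, h1, h2, h3⟩ := hyA
          refine ⟨k, h1, h2, h3.trans ?_⟩
          rw [hsplit]
          exact le_self_add
        · have hyB : y ∈ B m := .inl ⟨hy 0, hyA⟩
          refine ⟨1, le_rfl, by omega, ?_⟩
          rw [birkhoffSum_one, hh, indicator_of_mem hyB]
          exact (hanti 1 y (Nat.zero_le m)).trans le_add_self
      · intro y
        refine (hanti 1 y (Nat.zero_le m)).trans ?_
        change F y ≤ _
        by_cases hyB : y ∈ B m
        · rw [hh, indicator_of_mem hyB]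
          exact le_add_self.trans le_add_self
        · have : F y ≤ m := not_lt.1 fun hlt => hyB (.inr hlt)
          exact this.trans le_self_add
    obtain ⟨N, hN⟩ := ENNReal.exists_nat_mul_gt (a := (β : ℝ≥0∞)) (b := (m + 1 : ℕ) * (m : ℝ≥0∞))
      (by simpa using hβ.ne')
      (ENNReal.mul_ne_top (ENNReal.natCast_ne_top _) (ENNReal.natCast_ne_top _))
    filter_upwards [eventually_ge_atTop N, eventually_ge_atTop 1] with n hn hn1
    calc f m n x ≤ (m + 1 : ℕ) * (m : ℝ≥0∞) + (n * (q : ℝ≥0∞) + birkhoffSum T h n x) := by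
          rw [← hsplit]; exact hcov n
      _ ≤ n * (β : ℝ≥0∞) + (n * (q : ℝ≥0∞) + n * β) := by
          refine add_le_add (hN.le.trans ?_) (add_le_add le_rfl (hcon n hn1).le)
          gcongr
      _ = _ := by ring
  have hbad0 : μ bad = 0 := by
    have : (β : ℝ≥0∞) * μ bad ≤ 0 := ge_of_tendsto' hBlim hbadle
    simpa [hβ.ne'] using this
  have hae : ∀ᵐ x ∂μ, x ∉ bad := measure_eq_zero_iff_ae_notMem.1 hbad0
  filter_upwards [hEinv, hae] with x hx1 hx2 hxE
  by_contra hcon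
  exact hx2 ⟨fun k => hEA (hx1 hxE k), hcon⟩

/-! ### The positive part of the logarithm -/

lemma logPlus_le_ofReal_iff {a : ℝ≥0∞} {s : ℝ} (hs : 0 ≤ s) :
    logPlus a ≤ ENNReal.ofReal s ↔ a ≤ ENNReal.ofReal (Real.exp s) := by
  unfold logPlus
  split_ifs with h
  · simp [h]
  · rw [ENNReal.ofReal_le_ofReal_iff hs, ENNReal.le_ofReal_iff_toReal_le h (Real.exp_pos s).le]
    rcases (ENNReal.toReal_nonneg (a := a)).eq_or_lt with h0 | h0
    · simp [← h0, hs, (Real.exp_pos s).le]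
    · exact Real.log_le_iff_le_exp h0

lemma logPlus_eq_top_iff {a : ℝ≥0∞} : logPlus a = ⊤ ↔ a = ⊤ := by
  unfold logPlus
  split_ifs with h <;> simp [h]

lemma le_ofReal_exp_logPlus {a : ℝ≥0∞} (h : logPlus a ≠ ⊤) :
    a ≤ ENNReal.ofReal (Real.exp (logPlus a).toReal) := by
  rw [← logPlus_le_ofReal_iff ENNReal.toReal_nonneg, ENNReal.ofReal_toReal h]

lemma logPlus_mono : Monotone logPlus := by
  intro a b hab
  by_cases hb : logPlus b = ⊤
  · simp [hb]
  · rw [← ENNReal.ofReal_toReal hb, logPlus_le_ofReal_iff ENNReal.toReal_nonneg]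
    exact hab.trans (le_ofReal_exp_logPlus hb)

lemma logPlus_mul_le (a b : ℝ≥0∞) : logPlus (a * b) ≤ logPlus a + logPlus b := by
  by_cases ha : logPlus a = ⊤
  · simp [ha]
  by_cases hb : logPlus b = ⊤
  · simp [hb]
  rw [← ENNReal.ofReal_toReal ha, ← ENNReal.ofReal_toReal hb,
    ← ENNReal.ofReal_add ENNReal.toReal_nonneg ENNReal.toReal_nonneg,
    logPlus_le_ofReal_iff (by positivity), Real.exp_add, ENNReal.ofReal_mul (Real.exp_pos _).le]
  exact mul_le_mul' (le_ofReal_exp_logPlus ha) (le_ofReal_exp_logPlus hb)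

lemma iInf_logPlus_le {ι : Type*} (u : ι → ℝ≥0∞) : ⨅ i, logPlus (u i) ≤ logPlus (⨅ i, u i) := by
  by_cases ht : logPlus (⨅ i, u i) = ⊤
  · simp [ht]
  refine ENNReal.le_of_forall_pos_le_add fun ε hε _ => ?_
  have hlt : ⨅ i, u i <
      ENNReal.ofReal (Real.exp ((logPlus (⨅ i, u i)).toReal + (ε : ℝ))) := by
    refine (le_ofReal_exp_logPlus ht).trans_lt ?_
    rw [ENNReal.ofReal_lt_ofReal_iff (Real.exp_pos _), Real.exp_lt_exp]
    linarith [show (0 : ℝ) < ε from hε]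
  obtain ⟨i, hi⟩ := iInf_lt_iff.1 hlt
  refine (iInf_le _ i).trans ?_
  have := (logPlus_le_ofReal_iff (a := u i)
    (add_nonneg ENNReal.toReal_nonneg ε.coe_nonneg)).2 hi.le
  rwa [ENNReal.ofReal_add ENNReal.toReal_nonneg ε.coe_nonneg, ENNReal.ofReal_toReal ht,
    ENNReal.ofReal_coe_nnreal] at this

/-! ### Lipschitz constants on Bowen balls -/

lemma lipBowen_mono {X : Type*} [PseudoMetricSpace X] (T : X → X) (n : ℕ) (x : X) :
    Monotone fun r => lipBowen T n r x := by
  intro r s hrs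
  refine biSup_mono fun y hy => ⟨fun k hk => (hy.1 k hk).trans_le hrs, hy.2⟩

lemma lipBowen_zero_le {X : Type*} [PseudoMetricSpace X] (T : X → X) (r : ℝ) (x : X) :
    lipBowen T 0 r x ≤ 1 := by
  refine iSup₂_le fun y _ => ?_
  simpa using div_self_le_one (dist x y)

lemma ofReal_dist_iterate_le {X : Type*} [MetricSpace X] {T : X → X} {n : ℕ} {r : ℝ}
    {x y : X} (hy : y ∈ bowenBall T n x r) :
    ENNReal.ofReal (dist (T^[n] x) (T^[n] y)) ≤ lipBowen T n r x * ENNReal.ofReal (dist x y) := by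
  rcases eq_or_ne y x with rfl | hne
  · simp
  have hd : 0 < dist x y := dist_pos.2 hne.symm
  have h : ENNReal.ofReal (dist (T^[n] x) (T^[n] y) / dist x y) ≤ lipBowen T n r x :=
    le_iSup₂_of_le y ⟨hy, hne⟩ le_rfl
  calc ENNReal.ofReal (dist (T^[n] x) (T^[n] y))
      = ENNReal.ofReal (dist (T^[n] x) (T^[n] y) / dist x y) * ENNReal.ofReal (dist x y) := by
        rw [← ENNReal.ofReal_mul (by positivity), div_mul_cancel₀ _ hd.ne']
    _ ≤ _ := by gcongr

lemma lipBowen_add_le {X : Type*} [MetricSpace X] (T : X → X) (n l : ℕ) (r : ℝ) (x : X) :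
    lipBowen T (n + l) r x ≤ lipBowen T n r x * lipBowen T l r (T^[n] x) := by
  refine iSup₂_le fun y hy => ?_
  have hd : 0 < dist x y := dist_pos.2 fun h => hy.2 h.symm
  have h1 : y ∈ bowenBall T n x r := fun k hk => hy.1 k (by omega)
  have h2 : T^[n] y ∈ bowenBall T l (T^[n] x) r := by
    intro k hk
    rw [← Function.iterate_add_apply, ← Function.iterate_add_apply]
    exact hy.1 (k + n) (by omega)
  rw [ENNReal.ofReal_div_of_pos hd]
  refine ENNReal.div_le_of_le_mul ?_
  calc ENNReal.ofReal (dist (T^[n + l] x) (T^[n + l] y))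
      = ENNReal.ofReal (dist (T^[l] (T^[n] x)) (T^[l] (T^[n] y))) := by
        rw [add_comm n l, Function.iterate_add_apply, Function.iterate_add_apply]
    _ ≤ lipBowen T l r (T^[n] x) * ENNReal.ofReal (dist (T^[n] x) (T^[n] y)) :=
        ofReal_dist_iterate_le h2
    _ ≤ lipBowen T l r (T^[n] x) * (lipBowen T n r x * ENNReal.ofReal (dist x y)) := by
        gcongr
        exact ofReal_dist_iterate_le h1
    _ = _ := by ring

/-- `lipBowen` is lower semicontinuous: a point `y` competing in the supremum at `x` also competes
at nearby points, with a nearby ratio. -/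
lemma lowerSemicontinuous_lipBowen {X : Type*} [MetricSpace X] {T : X → X} (hT : Continuous T)
    (n : ℕ) (r : ℝ) : LowerSemicontinuous (lipBowen T n r) := by
  intro x a ha
  unfold lipBowen at ha
  simp only [lt_iSup_iff] at ha
  obtain ⟨y, hy, hay⟩ := ha
  have hd : dist x y ≠ 0 := dist_ne_zero.2 fun h => hy.2 h.symm
  have hcont : ContinuousAt
      (fun z => ENNReal.ofReal (dist (T^[n] z) (T^[n] y) / dist z y)) x := by
    refine ENNReal.continuous_ofReal.continuousAt.comp (ContinuousAt.div ?_ ?_ hd)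
    · exact ((hT.iterate n).dist continuous_const).continuousAt
    · exact (continuous_id.dist continuous_const).continuousAt
  have hball : ∀ᶠ z in 𝓝 x, y ∈ bowenBall T n z r := by
    have : ∀ᶠ z in 𝓝 x, ∀ k ∈ Finset.range n, dist (T^[k] z) (T^[k] y) < r := by
      rw [Filter.eventually_all_finset]
      intro k hk
      exact ((hT.iterate k).dist continuous_const).continuousAt.eventually_lt_const
        (hy.1 k (Finset.mem_range.1 hk))
    filter_upwards [this] with z hz k hk
    exact hz k (Finset.mem_range.2 hk)
  filter_upwards [hcont.eventually_const_lt hay, hball, isOpen_ne.mem_nhds (Ne.symm hy.2)]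
    with z hz1 hz2 hz3
  exact hz1.trans_le (le_iSup₂_of_le y ⟨hz2, fun h => hz3 h.symm⟩ le_rfl)

lemma bowenBall_mem_nhds {X : Type*} [PseudoMetricSpace X] {T : X → X} (hT : Continuous T)
    (n : ℕ) (x : X) {r : ℝ} (hr : 0 < r) : bowenBall T n x r ∈ 𝓝 x := by
  have : ∀ᶠ y in 𝓝 x, ∀ k ∈ Finset.range n, dist (T^[k] x) (T^[k] y) < r := by
    rw [Filter.eventually_all_finset]
    intro k _
    exact (continuous_const.dist (hT.iterate k)).continuousAt.eventually_lt_const (by simpa)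
  filter_upwards [this] with y hy k hk
  exact hy k (Finset.mem_range.2 hk)

/-- Deterministic part of the theorem. While the orbit of `y` stays `r`-close to that of `x` up to
time `k`, the bound on `lipBowen T k r x` controls the distance at time `k`, so closeness propagates
up to time `n`; times before `N` are covered by continuity. -/
lemma exists_ball_subset_bowenBall {X : Type*} [MetricSpace X] {T : X → X} (hT : Continuous T)
    {x : X} {r lam : ℝ} (hr : 0 < r) (hlam : 0 ≤ lam) {N : ℕ}
    (hN : ∀ n, N ≤ n → lipBowen T n r x ≤ ENNReal.ofReal (Real.exp (lam * n))) :
    ∃ η : ℝ, 0 < η ∧ ∀ n : ℕ,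
      Metric.ball x (η * Real.exp (-(lam * n))) ⊆ bowenBall T n x r := by
  obtain ⟨δ, hδ, hball⟩ := Metric.mem_nhds_iff.1 (bowenBall_mem_nhds hT N x hr)
  refine ⟨min δ r, lt_min hδ hr, fun n y hy => ?_⟩
  have hη : 0 < min δ r := lt_min hδ hr
  rw [Metric.mem_ball, dist_comm] at hy
  intro k
  induction k using Nat.strong_induction_on with
  | _ k ih =>
    intro hkn
    rcases lt_or_ge k N with hk | hk
    · refine hball ?_ k hk
      rw [Metric.mem_ball, dist_comm]
      refine hy.trans_le (le_trans ?_ (min_le_left δ r))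
      exact mul_le_of_le_one_right hη.le (Real.exp_le_one_iff.2 (by simp; positivity))
    · have hyk : y ∈ bowenBall T k x r := fun i hi => ih i hi (hi.trans hkn)
      have h1 := (ofReal_dist_iterate_le hyk).trans (mul_le_mul_left (hN k hk) _)
      rw [← ENNReal.ofReal_mul (Real.exp_pos _).le,
        ENNReal.ofReal_le_ofReal_iff (by positivity)] at h1
      calc dist (T^[k] x) (T^[k] y) ≤ Real.exp (lam * k) * dist x y := h1
        _ < Real.exp (lam * k) * (min δ r * Real.exp (-(lam * n))) := by gcongr
        _ = min δ r * Real.exp (lam * k - lam * n) := by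
          rw [sub_eq_add_neg, Real.exp_add]; ring
        _ ≤ min δ r := by
          refine mul_le_of_le_one_right hη.le (Real.exp_le_one_iff.2 ?_)
          have : (k : ℝ) ≤ n := by exact_mod_cast hkn.le
          nlinarith
        _ ≤ r := min_le_right δ r

/-! ### Exponentially small balls inside Bowen balls -/

/-- for `μ`-a.e. `x` whose maximal Lyapunov exponent
`χ(x) = limₙ (1/n) log⁺𝓛ₙ(x)` exists and is finite, for every `λ > χ(x)` and `ε > 0`
there are `η > 0` and `N ≥ 1` with `B(x, η e^{-nλ}) ⊆ Bₙ(x, ε, T)` for all `n ≥ N`. -/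
theorem stmt14 {X : Type*} [MetricSpace X] [CompactSpace X] [MeasurableSpace X] [BorelSpace X]
    (T : X ≃ₜ X) (μ : Measure X) [IsProbabilityMeasure μ]
    (hT : MeasurePreserving (⇑T) μ μ)
    (rstar : ℝ) (hrstar : 0 < rstar)
    (hint : ∫⁻ x, logPlus (lipBowen (⇑T) 1 rstar x) ∂μ < ⊤) :
    ∀ᵐ x ∂μ, ∀ c : ℝ≥0,
      Tendsto (fun n : ℕ => logPlus (pointwiseLip (⇑T) n x) / (n : ℝ≥0∞)) atTop
        (𝓝 (c : ℝ≥0∞)) →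
      ∀ lam : ℝ, (c : ℝ) < lam → ∀ ε : ℝ, 0 < ε →
        ∃ η : ℝ, 0 < η ∧ ∃ N : ℕ, 1 ≤ N ∧ ∀ n, N ≤ n →
          Metric.ball x (η * Real.exp (-(lam * n))) ⊆ bowenBall (⇑T) n x ε := by
  set f : ℕ → ℕ → X → ℝ≥0∞ :=
    fun j n x => logPlus (lipBowen (⇑T) n (rstar / ((j : ℝ) + 1)) x) with hf
  have hranti : Antitone fun j : ℕ => rstar / ((j : ℝ) + 1) := by
    intro i j hij
    dsimp only
    gcongr
  have hrpos : ∀ j : ℕ, 0 < rstar / ((j : ℝ) + 1) := fun j => by positivity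
  have hrlim : Tendsto (fun j : ℕ => rstar / ((j : ℝ) + 1)) atTop (𝓝 0) :=
    tendsto_const_nhds.div_atTop (tendsto_natCast_atTop_atTop.atTop_add tendsto_const_nhds)
  have hfanti : ∀ n x, Antitone fun j => f j n x := fun n x i j hij =>
    logPlus_mono (lipBowen_mono _ n x (hranti hij))
  have hmain : ∀ᵐ x ∂μ, ∀ q β : ℚ, ∀ _ : 0 < β,
      liminf (fun n : ℕ => (⨅ j, f j n x) / n) atTop < ((q : ℝ).toNNReal : ℝ≥0∞) →
      ∃ j, ∀ᶠ n : ℕ in atTop,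
        f j n x ≤ n * (((q : ℝ).toNNReal : ℝ≥0∞) + 2 * ((β : ℝ).toNNReal : ℝ≥0∞)) := by
    rw [ae_all_iff]; intro q
    rw [ae_all_iff]; intro β
    rw [ae_all_iff]; intro hβ
    refine ae_exists_eventually_le hT ?_ hfanti ?_ ?_ ?_ _ _ ?_
    · exact fun j n => logPlus_mono.measurable.comp
        (lowerSemicontinuous_lipBowen T.continuous n _).measurable
    · exact fun j n l x => (logPlus_mono (lipBowen_add_le _ n l _ x)).trans (logPlus_mul_le _ _)
    · intro j x
      have h1 : logPlus (lipBowen (⇑T) 0 (rstar / ((j : ℝ) + 1)) x) ≤ ENNReal.ofReal 0 := by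
        rw [logPlus_le_ofReal_iff le_rfl]
        simpa using lipBowen_zero_le (⇑T) _ x
      simpa using h1
    · simpa [hf] using hint.ne
    · simpa using hβ
  filter_upwards [hmain] with x hx c hc lam hlam ε hε
  have hlam0 : 0 ≤ lam := c.coe_nonneg.trans hlam.le
  obtain ⟨q, hcq, hql⟩ := exists_rat_btwn hlam
  have hq0 : (0 : ℝ) < q := c.coe_nonneg.trans_lt hcq
  obtain ⟨β, hβ0, hβ⟩ := exists_rat_btwn (show (0 : ℝ) < (lam - q) / 2 by linarith)
  have hβ0' : (0 : ℚ) < β := by exact_mod_cast hβ0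
  -- The infimum over the radii `rstar / (j + 1)` is the infimum over all positive radii.
  have hinf : ∀ n, (⨅ j, f j n x) ≤ logPlus (pointwiseLip (⇑T) n x) := by
    intro n
    refine (iInf_logPlus_le _).trans (logPlus_mono (le_iInf₂ fun r hr => ?_))
    obtain ⟨j, hj⟩ := (hrlim.eventually_lt_const hr).exists
    exact (iInf_le _ j).trans (lipBowen_mono _ n x hj.le)
  have hlow : liminf (fun n : ℕ => (⨅ j, f j n x) / n) atTop < ((q : ℝ).toNNReal : ℝ≥0∞) := by
    calc liminf (fun n : ℕ => (⨅ j, f j n x) / n) atTop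
        ≤ liminf (fun n : ℕ => logPlus (pointwiseLip (⇑T) n x) / (n : ℝ≥0∞)) atTop :=
          liminf_le_liminf (.of_forall fun n => ENNReal.div_le_div_right (hinf n) _)
      _ = c := hc.liminf_eq
      _ < _ := by
          rw [ENNReal.coe_lt_coe, Real.lt_toNNReal_iff_coe_lt]
          exact hcq
  obtain ⟨j, hj⟩ := hx q β hβ0' hlow
  obtain ⟨i, hi⟩ := (hrlim.eventually_lt_const hε).exists
  set J := max i j with hJ
  have hJε : rstar / ((J : ℝ) + 1) ≤ ε := (hranti (le_max_left i j)).trans hi.le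
  obtain ⟨N, hN⟩ := eventually_atTop.1 hj
  have hlip : ∀ n, N ≤ n → lipBowen (⇑T) n (rstar / ((J : ℝ) + 1)) x
      ≤ ENNReal.ofReal (Real.exp (lam * n)) := by
    intro n hn
    rw [← logPlus_le_ofReal_iff (by positivity)]
    calc f J n x ≤ f j n x := hfanti n x (le_max_right i j)
      _ ≤ n * (ENNReal.ofReal q + 2 * ENNReal.ofReal β) := hN n hn
      _ = ENNReal.ofReal (n * (q + 2 * β)) := by
        rw [ENNReal.ofReal_mul (by positivity), ENNReal.ofReal_add hq0.le (by positivity),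
          ENNReal.ofReal_mul (by norm_num)]
        simp
      _ ≤ ENNReal.ofReal (lam * n) := by
        rw [mul_comm]
        gcongr
        linarith
  obtain ⟨η, hη, hsub⟩ := exists_ball_subset_bowenBall T.continuous (hrpos J) hlam0 hlip
  exact ⟨η, hη, 1, le_rfl, fun n _ y hy k hk => (hsub n hy k hk).trans_le hJε⟩
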